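/- arXiv:1310.3392 — 2 statements merged into one kernel-verified Lean document; each statement's English description precedes it below -/
import Mathlib

section
/- Let B₁, B₂ be real-valued functions on the primes with B₁(p), B₂(p) ∈ [−1,1] for all primes p, satisfying the pair Sato-Tate equidistribution hypothesis: for all closed intervals I₁, I₂ ⊆ [−1,1], the set {p prime : B₁(p) ∈ I₁ and B₂(p) ∈ I₂} has natural density μ_ST(I₁)·μ_ST(I₂). Define cᵢ(p) = (1 − 2√p·Bᵢ(p))/p for i = 1,2. Then the set {p prime : c₁(p)·c₂(p) > 0} has natural density 1/2. -/
/-!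
Since `c p` has the sign of `1 - 2 * √p * B p`, it is positive when `B p ≤ 0`, and it is negative
when `B p ≥ ε > 0` and `p` is large enough that `2 * √p * ε > 1`. So for every `ε ∈ (0, 1)` the set
`S = {c₁ c₂ > 0}` contains, up to finitely many primes, the two disjoint boxes
`[-1,0] × [-1,0]` and `[ε,1] × [ε,1]` (in terms of `(B₁, B₂)`), while `Sᶜ` contains the boxes
`[-1,0] × [ε,1]` and `[ε,1] × [-1,0]`. With `m = muST ε 1` this bounds the lower density of `S`
below by `1/4 + m ^ 2` and that of `Sᶜ` by `m`; both bounds tend to `1/2` as `ε → 0`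
(`muST_tendsto`). The passage from boxes to lower densities is `eventually_lt_of_disjoint`.
-/

open scoped Classical
open Filter

/-- The prime counting function `π(x)`: the number of primes `≤ x`. -/
noncomputable def primePi (x : ℕ) : ℕ := ((Finset.range (x + 1)).filter Nat.Prime).card

/-- The number of primes `p ≤ x` lying in the set `S`. -/
noncomputable def primeCount (S : Set ℕ) (x : ℕ) : ℕ :=
  ((Finset.range (x + 1)).filter (fun p => p.Prime ∧ p ∈ S)).card

/-- A set `S` of primes has natural density `δ` if `#{p ∈ S : p ≤ x}/π(x) → δ`. -/
def HasPrimeDensity (S : Set ℕ) (δ : ℝ) : Prop :=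
  Filter.Tendsto (fun x : ℕ => (primeCount S x : ℝ) / (primePi x : ℝ)) Filter.atTop (nhds δ)

/-- The Sato–Tate measure of the interval `[a,b]`: `(2/π)∫_a^b √(1-t²) dt`. -/
noncomputable def muST (a b : ℝ) : ℝ := (2 / Real.pi) * ∫ t in a..b, Real.sqrt (1 - t ^ 2)

theorem primePi_tendsto : Tendsto (fun x : ℕ => (primePi x : ℝ)) atTop atTop := by
  refine tendsto_natCast_atTop_atTop.comp ?_
  refine Nat.tendsto_primeCounting.congr fun x => ?_
  rw [primePi, Nat.primeCounting, Nat.primeCounting', Nat.count_eq_card_filter_range]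

theorem primeCount_add_compl (S : Set ℕ) (x : ℕ) :
    primeCount S x + primeCount Sᶜ x = primePi x := by
  unfold primeCount primePi
  rw [← Finset.card_union_of_disjoint]
  · congr 1
    ext p
    simp only [Finset.mem_union, Finset.mem_filter, Set.mem_compl_iff]
    tauto
  · rw [Finset.disjoint_left]
    intro p
    simp only [Finset.mem_filter, Set.mem_compl_iff]
    tauto

/-- The error term `N` accounts for the primes below `N`, where the inclusion may fail. -/
theorem primeCount_add_le {A B S : Set ℕ} (N : ℕ) (hAB : Disjoint A B)
    (hS : ∀ p : ℕ, p.Prime → N ≤ p → p ∈ A ∪ B → p ∈ S) (x : ℕ) :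
    primeCount A x + primeCount B x ≤ primeCount S x + N := by
  unfold primeCount
  rw [← Finset.card_union_of_disjoint]
  · calc _ ≤ (((Finset.range (x + 1)).filter (fun p => p.Prime ∧ p ∈ S)) ∪
              Finset.range N).card := by
          apply Finset.card_le_card
          intro p
          have := hS p
          simp only [Finset.mem_union, Finset.mem_filter, Finset.mem_range, Set.mem_union] at this ⊢
          rcases lt_or_ge p N with h | h <;> tauto
      _ ≤ _ := by
          refine (Finset.card_union_le _ _).trans ?_
          simp
  · rw [Finset.disjoint_left]
    intro p h1 h2
    simp only [Finset.mem_filter] at h1 h2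
    exact Set.disjoint_left.1 hAB h1.2.2 h2.2.2

/-- The lower density of `S` is at least the sum of the densities of two disjoint sets that `S`
contains up to finitely many primes. -/
theorem eventually_lt_of_disjoint {A B S : Set ℕ} {a b t : ℝ} (N : ℕ) (hA : HasPrimeDensity A a)
    (hB : HasPrimeDensity B b) (hAB : Disjoint A B)
    (hS : ∀ p : ℕ, p.Prime → N ≤ p → p ∈ A ∪ B → p ∈ S) (ht : t < a + b) :
    ∀ᶠ x : ℕ in atTop, t < (primeCount S x : ℝ) / (primePi x : ℝ) := by
  have h0 : Tendsto (fun x : ℕ => (N : ℝ) / (primePi x : ℝ)) atTop (nhds 0) :=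
    primePi_tendsto.const_div_atTop _
  have h := (Tendsto.add hA hB).sub h0
  rw [sub_zero] at h
  filter_upwards [h.eventually (lt_mem_nhds ht), primePi_tendsto.eventually_gt_atTop 0]
    with x hx hpos
  refine hx.trans_le ?_
  rw [← add_div, ← sub_div]
  gcongr
  rw [sub_le_iff_le_add]
  exact_mod_cast primeCount_add_le N hAB hS x

theorem intervalIntegrable_semicircle (a b : ℝ) :
    IntervalIntegrable (fun t : ℝ => Real.sqrt (1 - t ^ 2)) MeasureTheory.volume a b :=
  Continuous.intervalIntegrable (by fun_prop) a b

theorem muST_half : muST (-1) 0 = 1 / 2 ∧ muST 0 1 = 1 / 2 := by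
  have hsymm : ∫ t in (-1 : ℝ)..0, Real.sqrt (1 - t ^ 2) =
      ∫ t in (0 : ℝ)..1, Real.sqrt (1 - t ^ 2) := by
    have := intervalIntegral.integral_comp_neg (a := 0) (b := 1)
      (fun t : ℝ => Real.sqrt (1 - t ^ 2))
    simpa using this.symm
  have hadd := intervalIntegral.integral_add_adjacent_intervals
    (intervalIntegrable_semicircle (-1) 0) (intervalIntegrable_semicircle 0 1)
  rw [integral_sqrt_one_sub_sq] at hadd
  have h : ∫ t in (0 : ℝ)..1, Real.sqrt (1 - t ^ 2) = Real.pi / 4 := by linarith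
  have hpi := Real.pi_ne_zero
  unfold muST
  rw [hsymm, h]
  constructor <;> (field_simp; norm_num)

theorem muST_tendsto : Tendsto (fun ε => muST ε 1) (nhds 0) (nhds (1 / 2)) := by
  rw [← muST_half.2]
  have hcont : Continuous fun ε => muST ε 1 := by
    unfold muST
    simp_rw [intervalIntegral.integral_symm 1]
    exact continuous_const.mul
      (intervalIntegral.continuous_primitive intervalIntegrable_semicircle 1).neg
  exact hcont.tendsto 0

theorem pos_of_nonpos {p : ℕ} {B c : ℝ} (hp : p.Prime)
    (hc : c = (1 - 2 * Real.sqrt p * B) / p) (hB : B ≤ 0) : 0 < c := by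
  have hp0 : (0 : ℝ) < p := by exact_mod_cast hp.pos
  rw [hc]
  apply div_pos _ hp0
  nlinarith [Real.sqrt_nonneg (p : ℝ)]

theorem neg_of_le {p : ℕ} {B c ε : ℝ} (hp : p.Prime)
    (hc : c = (1 - 2 * Real.sqrt p * B) / p) (hε : 1 < 2 * Real.sqrt p * ε) (hB : ε ≤ B) :
    c < 0 := by
  have hp0 : (0 : ℝ) < p := by exact_mod_cast hp.pos
  rw [hc]
  apply div_neg_of_neg_of_pos _ hp0
  nlinarith [Real.sqrt_nonneg (p : ℝ)]

theorem stmt_4 (B₁ B₂ c₁ c₂ : ℕ → ℝ)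
    (hB₁ : ∀ p : ℕ, p.Prime → B₁ p ∈ Set.Icc (-1 : ℝ) 1)
    (hB₂ : ∀ p : ℕ, p.Prime → B₂ p ∈ Set.Icc (-1 : ℝ) 1)
    (hST : ∀ a₁ b₁ a₂ b₂ : ℝ, -1 ≤ a₁ → a₁ ≤ b₁ → b₁ ≤ 1 → -1 ≤ a₂ → a₂ ≤ b₂ → b₂ ≤ 1 →
      HasPrimeDensity {p | B₁ p ∈ Set.Icc a₁ b₁ ∧ B₂ p ∈ Set.Icc a₂ b₂}
        (muST a₁ b₁ * muST a₂ b₂))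
    (hc₁ : ∀ p : ℕ, p.Prime → c₁ p = (1 - 2 * Real.sqrt p * B₁ p) / p)
    (hc₂ : ∀ p : ℕ, p.Prime → c₂ p = (1 - 2 * Real.sqrt p * B₂ p) / p) :
    HasPrimeDensity {p | 0 < c₁ p * c₂ p} (1 / 2) := by
  set S : Set ℕ := {p | 0 < c₁ p * c₂ p}
  -- Choose `ε` so that each of the two lower bounds exceeds `1 / 2 - η`.
  have key : ∀ η : ℝ, 0 < η →
      (∀ᶠ x : ℕ in atTop, 1 / 2 - η < (primeCount S x : ℝ) / (primePi x : ℝ)) ∧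
      (∀ᶠ x : ℕ in atTop, 1 / 2 - η < (primeCount Sᶜ x : ℝ) / (primePi x : ℝ)) := by
    intro η hη
    obtain ⟨ε, hm, hε1, hε0⟩ : ∃ ε : ℝ, 1 / 2 - η < muST ε 1 ∧ ε < 1 ∧ 0 < ε :=
      (((muST_tendsto.eventually (lt_mem_nhds (sub_lt_self _ hη))).and
        (gt_mem_nhds one_pos)).filter_mono nhdsWithin_le_nhds |>.and
        (self_mem_nhdsWithin (s := Set.Ioi (0 : ℝ)))).exists.imp fun _ h => ⟨h.1.1, h.1.2, h.2⟩
    obtain ⟨N, hN⟩ : ∃ N : ℕ, ∀ p : ℕ, N ≤ p → 1 < 2 * Real.sqrt p * ε := by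
      have h : Tendsto (fun p : ℕ => 2 * Real.sqrt p * ε) atTop atTop :=
        ((Real.tendsto_sqrt_atTop.comp tendsto_natCast_atTop_atTop).const_mul_atTop
          two_pos).atTop_mul_const hε0
      exact eventually_atTop.1 (h.eventually_gt_atTop 1)
    have hLL := hST (-1) 0 (-1) 0 le_rfl (by norm_num) (by norm_num) le_rfl (by norm_num)
      (by norm_num)
    have hRR := hST ε 1 ε 1 (by linarith) hε1.le le_rfl (by linarith) hε1.le le_rfl
    have hLR := hST (-1) 0 ε 1 le_rfl (by norm_num) (by norm_num) (by linarith) hε1.le le_rfl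
    have hRL := hST ε 1 (-1) 0 (by linarith) hε1.le le_rfl le_rfl (by norm_num) (by norm_num)
    rw [muST_half.1] at hLL hLR hRL
    constructor
    · refine eventually_lt_of_disjoint N hLL hRR ?_ ?_ ?_
      · rw [Set.disjoint_left]
        rintro p ⟨h1, -⟩ ⟨h2, -⟩
        linarith [h1.2, h2.1]
      · rintro p hp hpN (⟨h1, h2⟩ | ⟨h1, h2⟩)
        · exact mul_pos (pos_of_nonpos hp (hc₁ p hp) h1.2) (pos_of_nonpos hp (hc₂ p hp) h2.2)
        · exact mul_pos_of_neg_of_neg (neg_of_le hp (hc₁ p hp) (hN p hpN) h1.1)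
            (neg_of_le hp (hc₂ p hp) (hN p hpN) h2.1)
      · -- `m ^ 2 ≥ m - 1 / 4`
        nlinarith [sq_nonneg (muST ε 1 - 1 / 2)]
    · refine eventually_lt_of_disjoint N hLR hRL ?_ ?_ ?_
      · rw [Set.disjoint_left]
        rintro p ⟨h1, -⟩ ⟨h2, -⟩
        linarith [h1.2, h2.1]
      · rintro p hp hpN (⟨h1, h2⟩ | ⟨h1, h2⟩)
        · exact (mul_neg_of_pos_of_neg (pos_of_nonpos hp (hc₁ p hp) h1.2)
            (neg_of_le hp (hc₂ p hp) (hN p hpN) h2.1)).not_gt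
        · exact (mul_neg_of_neg_of_pos (neg_of_le hp (hc₁ p hp) (hN p hpN) h1.1)
            (pos_of_nonpos hp (hc₂ p hp) h2.2)).not_gt
      · linarith
  unfold HasPrimeDensity
  rw [Metric.tendsto_nhds]
  intro η hη
  filter_upwards [(key η hη).1, (key η hη).2, primePi_tendsto.eventually_gt_atTop 0]
    with x h1 h2 hpos
  have hsum : (primeCount S x : ℝ) / (primePi x : ℝ) + (primeCount Sᶜ x : ℝ) / (primePi x : ℝ)
      = 1 := by
    rw [← add_div, div_eq_one_iff_eq hpos.ne']
    exact_mod_cast primeCount_add_compl S x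
  rw [Real.dist_eq, abs_lt]
  constructor <;> linarith
end

section
/- Let B be a real-valued function on the primes with B(p) ∈ [−1,1] for all primes p, satisfying the Sato-Tate equidistribution hypothesis: for every closed interval I ⊆ [−1,1], the set {p prime : B(p) ∈ I} has natural density μ_ST(I). Define c(p) = (1 − 2√p·B(p))/p. Then c takes infinitely many distinct positive values, i.e., the set of values {c(p) : p prime, c(p) > 0} is infinite. -/
/-!
The interval `[-1, 0]` has positive Sato–Tate measure, and a set of primes of positive density is
infinite because `π(x) → ∞`. So infinitely many primes have `B p ≤ 0`; for these `c p ≥ 1 / p > 0`.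
On the other hand `c p * √p ≤ 3` for every prime, so a fixed positive value is taken by only
finitely many primes. An infinite set mapped with finite fibres has infinite image.
-/

open scoped Classical
open Filter

lemma tendsto_primePi : Tendsto primePi atTop atTop := by
  refine Nat.tendsto_primeCounting.congr fun x => ?_
  rw [Nat.primeCounting, Nat.primeCounting', Nat.count_eq_card_filter_range, primePi]

/-- A set of nonzero density contains infinitely many primes: otherwise the counting function in the
numerator is bounded while `π(x) → ∞`, so the density is zero. -/
lemma primes_infinite_of_density {S : Set ℕ} {δ : ℝ} (h : HasPrimeDensity S δ) (hδ : δ ≠ 0) :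
    {p : ℕ | p.Prime ∧ p ∈ S}.Infinite := by
  intro hfin
  apply hδ
  refine tendsto_nhds_unique h ?_
  have hpi : Tendsto (fun x : ℕ => (primePi x : ℝ)) atTop atTop :=
    tendsto_natCast_atTop_atTop.comp tendsto_primePi
  refine squeeze_zero (fun x => by positivity) (fun x => ?_)
    (hpi.const_div_atTop (hfin.toFinset.card : ℝ))
  gcongr
  unfold primeCount
  apply Finset.card_le_card
  intro p hp
  simpa using (Finset.mem_filter.mp hp).2

lemma muST_pos {a b : ℝ} (ha : -1 ≤ a) (hab : a < b) (hb : b ≤ 1) : 0 < muST a b := by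
  unfold muST
  refine mul_pos (by positivity) ?_
  refine intervalIntegral.intervalIntegral_pos_of_pos_on
    (Continuous.intervalIntegrable (by fun_prop) _ _) (fun t ht => ?_) hab
  apply Real.sqrt_pos.mpr
  nlinarith [ht.1, ht.2]

theorem stmt_19 (B c : ℕ → ℝ)
    (hB : ∀ p : ℕ, p.Prime → B p ∈ Set.Icc (-1 : ℝ) 1)
    (hST : ∀ a b : ℝ, -1 ≤ a → a ≤ b → b ≤ 1 →
      HasPrimeDensity {p | B p ∈ Set.Icc a b} (muST a b))
    (hc : ∀ p : ℕ, p.Prime → c p = (1 - 2 * Real.sqrt p * B p) / p) :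
    (c '' {p : ℕ | p.Prime ∧ 0 < c p}).Infinite := by
  have hinf : {p : ℕ | p.Prime ∧ 0 < c p}.Infinite := by
    refine (primes_infinite_of_density (hST (-1) 0 (by norm_num) (by norm_num) (by norm_num))
      (muST_pos (by norm_num) (by norm_num) (by norm_num)).ne').mono ?_
    rintro p ⟨hp, hpB⟩
    refine ⟨hp, ?_⟩
    have hp0 : (0 : ℝ) < p := by exact_mod_cast hp.pos
    rw [hc p hp]
    refine div_pos ?_ hp0
    nlinarith [mul_nonneg (Real.sqrt_nonneg p) (neg_nonneg.mpr hpB.2)]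
  intro hfin
  refine hinf (Set.Finite.of_finite_fibers c hfin ?_)
  rintro _ ⟨q, ⟨-, hv⟩, rfl⟩
  refine (Set.finite_Iic ⌈(3 / c q) ^ 2⌉₊).subset ?_
  rintro p ⟨⟨hp, -⟩, hpv⟩
  have hpv : c p = c q := hpv
  have hp1 : (1 : ℝ) ≤ p := by exact_mod_cast hp.one_le
  have hs1 : 1 ≤ Real.sqrt p := Real.one_le_sqrt.mpr hp1
  have hsq : Real.sqrt p * Real.sqrt p = p := Real.mul_self_sqrt (by linarith)
  have h1 : c q * p = 1 - 2 * Real.sqrt p * B p := by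
    rw [← hpv, hc p hp, div_mul_cancel₀ _ (by linarith)]
  have h2 : c q * Real.sqrt p ≤ 3 := by
    refine le_of_mul_le_mul_right ?_ (lt_of_lt_of_le one_pos hs1)
    rw [mul_assoc, hsq, h1]
    nlinarith [(hB p hp).1]
  have h3 : Real.sqrt p ≤ 3 / c q := by
    rw [le_div_iff₀ hv]
    linarith
  have h4 : (p : ℝ) ≤ (3 / c q) ^ 2 := by
    rw [← hsq]
    nlinarith
  have h5 : (p : ℝ) ≤ (⌈(3 / c q) ^ 2⌉₊ : ℝ) := h4.trans (Nat.le_ceil _)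
  exact_mod_cast h5
end
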